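/- For all r ∈ [0,1], the derivative of the function α ↦ t(r,α) tends to 0 as α tends to 0 from the right, i.e. the limit of (d/dα) t(r,α) along the filter 𝓝[>] 0 is 0. -/

import Mathlib

/-!
For `0 < α < 1/2` the argument `p = (1+r)/2 - 2α²r` lies in `(0,1)`, so `g(r,·)` is differentiable
at `α` with derivative `(log (1-p) - log p) · (-4αr) / log 2` (`hasDerivAt_gFun`). As `α → 0⁺`,
`p` tends to `(1+r)/2 > 0`, so `α log p → 0`. For `r < 1` also `1 - p` has a positive limit and
`α log (1-p) → 0`; for `r = 1` one has `1 - p = 2α²`, and `α log (2α²) → 0` because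
`α log α → 0`. Hence the derivative of `g(r,·)` tends to `0` for every `r ∈ [0,1]`
(`tendsto_deriv_gFun`), and `t(r,·)` is a constant plus `g(1,·)/2 - g(r,·)`.
-/

open Filter Topology

/-- The base-2 binary entropy function `h(p) = -p·log₂ p - (1-p)·log₂(1-p)`. -/
noncomputable def binEnt (p : ℝ) : ℝ := -(p * Real.logb 2 p) - (1 - p) * Real.logb 2 (1 - p)

/-- `g(r,α) = h((1+r)/2 - 2α²r)`. -/
noncomputable def gFun (r α : ℝ) : ℝ := binEnt ((1 + r) / 2 - 2 * α ^ 2 * r)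

/-- `t(r,α) = (1 + g(1,α))/2 + h((1+r)/2) - g(r,α)`. -/
noncomputable def tFun (r α : ℝ) : ℝ :=
  (1 + gFun 1 α) / 2 + binEnt ((1 + r) / 2) - gFun r α

lemma binEnt_eq (p : ℝ) : binEnt p = Real.binEntropy p / Real.log 2 := by
  unfold binEnt Real.binEntropy Real.logb
  rw [Real.log_inv, Real.log_inv]
  ring

lemma hasDerivAt_gFun {r α : ℝ} (hr : r ∈ Set.Icc (0 : ℝ) 1) (h0 : 0 < α) (h1 : α < 1 / 2) :
    HasDerivAt (gFun r) ((Real.log (1 - ((1 + r) / 2 - 2 * α ^ 2 * r))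
      - Real.log ((1 + r) / 2 - 2 * α ^ 2 * r)) * (-(4 * α * r)) / Real.log 2) α := by
  obtain ⟨hr0, hr1⟩ := hr
  have hsq : α ^ 2 < 1 / 4 := by nlinarith
  have hsq0 : 0 < α ^ 2 := by positivity
  have hp0 : (1 + r) / 2 - 2 * α ^ 2 * r ≠ 0 := by
    have : 0 < (1 + r) / 2 - 2 * α ^ 2 * r := by nlinarith
    exact this.ne'
  have hp1 : (1 + r) / 2 - 2 * α ^ 2 * r ≠ 1 := by
    have : (1 + r) / 2 - 2 * α ^ 2 * r < 1 := by
      rcases hr1.lt_or_eq with h | rfl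
      · nlinarith [mul_nonneg hsq0.le hr0]
      · linarith
    exact this.ne
  have hin : HasDerivAt (fun a : ℝ => (1 + r) / 2 - 2 * a ^ 2 * r) (-(4 * α * r)) α := by
    have := ((((hasDerivAt_id α).pow 2).const_mul 2).mul_const r).const_sub ((1 + r) / 2)
    refine this.congr_deriv ?_
    simp only [id, Nat.cast_ofNat, Nat.add_one_sub_one, pow_one, mul_one]
    ring
  have hfun : gFun r
      = fun a => Real.binEntropy ((1 + r) / 2 - 2 * a ^ 2 * r) / Real.log 2 := by
    funext a
    exact binEnt_eq _
  rw [hfun]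
  exact ((Real.hasDerivAt_binEntropy hp0 hp1).comp α hin).div_const _

lemma tendsto_mul_log_of_pos {f : ℝ → ℝ} (hf : Continuous f) (h : 0 < f 0) :
    Tendsto (fun α => α * Real.log (f α)) (𝓝[>] (0 : ℝ)) (𝓝 0) := by
  have : ContinuousAt (fun α => α * Real.log (f α)) 0 :=
    continuousAt_id.mul (hf.continuousAt.log h.ne')
  simpa using this.tendsto.mono_left nhdsWithin_le_nhds

lemma tendsto_mul_log_two_mul_sq :
    Tendsto (fun α : ℝ => α * Real.log (2 * α ^ 2)) (𝓝[>] (0 : ℝ)) (𝓝 0) := by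
  have hlog : Tendsto (fun α : ℝ => α * Real.log α) (𝓝[>] (0 : ℝ)) (𝓝 0) := by
    simpa using (Real.continuous_mul_log.tendsto 0).mono_left nhdsWithin_le_nhds
  have hid : Tendsto (fun α : ℝ => α) (𝓝[>] (0 : ℝ)) (𝓝 0) :=
    tendsto_id.mono_left nhdsWithin_le_nhds
  have := (hid.mul_const (Real.log 2)).add (hlog.const_mul 2)
  simp only [zero_mul, mul_zero, add_zero] at this
  refine this.congr' ?_
  filter_upwards [self_mem_nhdsWithin] with α (hα : 0 < α)
  rw [Real.log_mul two_ne_zero (by positivity), Real.log_pow]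
  push_cast
  ring

lemma tendsto_deriv_gFun {r : ℝ} (hr : r ∈ Set.Icc (0 : ℝ) 1) :
    Tendsto (deriv (gFun r)) (𝓝[>] (0 : ℝ)) (𝓝 0) := by
  have hp : Tendsto (fun α => α * Real.log ((1 + r) / 2 - 2 * α ^ 2 * r))
      (𝓝[>] (0 : ℝ)) (𝓝 0) := by
    refine tendsto_mul_log_of_pos (f := fun α => (1 + r) / 2 - 2 * α ^ 2 * r)
      (by fun_prop) ?_
    have := hr.1
    norm_num
    linarith
  have hq : Tendsto (fun α => α * Real.log (1 - ((1 + r) / 2 - 2 * α ^ 2 * r)))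
      (𝓝[>] (0 : ℝ)) (𝓝 0) := by
    rcases hr.2.lt_or_eq with h | rfl
    · refine tendsto_mul_log_of_pos (f := fun α => 1 - ((1 + r) / 2 - 2 * α ^ 2 * r))
        (by fun_prop) ?_
      norm_num
      linarith
    · refine tendsto_mul_log_two_mul_sq.congr fun α => ?_
      congr 2
      ring
  have hlim := (hq.sub hp).mul_const (-(4 * r) / Real.log 2)
  simp only [sub_zero, zero_mul] at hlim
  refine hlim.congr' ?_
  filter_upwards [Ioo_mem_nhdsGT (show (0 : ℝ) < 1 / 2 by norm_num)] with α hα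
  rw [(hasDerivAt_gFun hr hα.1 hα.2).deriv]
  ring

/-- For all `r ∈ [0,1]`, the derivative of `α ↦ t(r,α)` tends to `0` as
`α → 0⁺`, i.e. along the filter `𝓝[>] 0`. -/
theorem stmt_5 (r : ℝ) (hr : r ∈ Set.Icc (0 : ℝ) 1) :
    Tendsto (fun α => deriv (fun a => tFun r a) α) (𝓝[>] (0 : ℝ)) (𝓝 0) := by
  have h1 : (1 : ℝ) ∈ Set.Icc (0 : ℝ) 1 := ⟨zero_le_one, le_rfl⟩
  have hlim := ((tendsto_deriv_gFun h1).div_const 2).sub (tendsto_deriv_gFun hr)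
  simp only [zero_div, sub_zero] at hlim
  refine hlim.congr' ?_
  filter_upwards [Ioo_mem_nhdsGT (show (0 : ℝ) < 1 / 2 by norm_num)] with α hα
  have d1 := (hasDerivAt_gFun h1 hα.1 hα.2).differentiableAt.hasDerivAt
  have dr := (hasDerivAt_gFun hr hα.1 hα.2).differentiableAt.hasDerivAt
  exact ((((d1.const_add 1).div_const 2).add_const (binEnt ((1 + r) / 2))).sub dr).deriv.symm
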